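/- arXiv:1302.1782 — 3 statements merged into one kernel-verified Lean document; each statement's English description precedes it below -/
import Mathlib

section
/- Let 𝒞 be a small category, (−⊗I) elementary homotopy data on Psh(𝒞), and T a monad on Psh(𝒞) (with unit η and multiplication μ) satisfying (M1)–(M3). A map f : X → Y is a T-weak equivalence if and only if Tf : TX → TY is a homotopy equivalence admitting a homotopy inverse f̄ : TY → TX which is a homomorphism of (free) T-algebras, i.e., there exists f̄ : TY → TX with f̄ ∘ μ_Y = μ_X ∘ T(f̄), f̄ ∘ Tf ≃* id_{TX}, and Tf ∘ f̄ ≃* id_{TY}. -/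
open CategoryTheory Category Limits

universe w v u

/-- The category of presheaves on a small category. -/
abbrev Psh (C : Type u) [SmallCategory C] := Cᵒᵖ ⥤ Type u

namespace PaperMSMonad

/-- `f` is a retract of `g` in the arrow category. -/
def IsRetractOf {D : Type*} [Category D] {X Y Z W : D} (f : X ⟶ Y) (g : Z ⟶ W) : Prop :=
  ∃ (i : X ⟶ Z) (r : Z ⟶ X) (i' : Y ⟶ W) (r' : W ⟶ Y),
    i ≫ r = 𝟙 X ∧ i' ≫ r' = 𝟙 Y ∧ i ≫ g = f ≫ i' ∧ g ≫ r' = r ≫ f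

/-- The cocone on the restriction of `F : J ⥤ D` to `Set.Iio j`, with point `F.obj j`. -/
@[simps]
def coconeLT {D : Type*} [Category D] {J : Type w} [Preorder J] (F : J ⥤ D) (j : J) :
    Cocone ((Monotone.functor (f := (Subtype.val : Set.Iio j → J))
      (fun _ _ h => h)) ⋙ F) where
  pt := F.obj j
  ι :=
    { app := fun i => F.map (homOfLE i.2.le)
      naturality := fun i i' g => by
        dsimp [Monotone.functor]
        rw [Category.comp_id, ← F.map_comp]
        rfl }

/-- A morphism property is stable under transfinite composition if, for every well-ordered
type `J`, every functor `F : J ⥤ D` which is continuous at limit stages and whose successor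
maps all lie in `W`, and every colimit cocone on `F`, the component of the cocone at the
bottom element lies in `W`. -/
def StableUnderTransfiniteComposition {D : Type*} [Category D]
    (W : MorphismProperty D) : Prop :=
  ∀ (J : Type w) (_ : LinearOrder J) (_ : SuccOrder J) (_ : OrderBot J) (_ : WellFoundedLT J)
    (F : J ⥤ D),
    (∀ (j : J), ¬IsMax j → W (F.map (homOfLE (Order.le_succ j)))) →
    (∀ (j : J), Order.IsSuccLimit j → Nonempty (IsColimit (coconeLT F j))) →
    ∀ (c : Cocone F), Nonempty (IsColimit c) → W (c.ι.app ⊥)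

/-- A class of morphisms is weakly saturated if it contains all isomorphisms and is closed
under pushout (cobase change), retracts and transfinite composition. -/
def IsWeaklySaturated {D : Type*} [Category D] (W : MorphismProperty D) : Prop :=
  (∀ ⦃X Y : D⦄ (f : X ⟶ Y), IsIso f → W f) ∧
  (∀ ⦃Z X Y P : D⦄ (t : Z ⟶ X) (f : Z ⟶ Y) (g : X ⟶ P) (b : Y ⟶ P),
      IsPushout t f g b → W f → W g) ∧
  (∀ ⦃X Y Z W' : D⦄ (f : X ⟶ Y) (g : Z ⟶ W'), IsRetractOf f g → W g → W f) ∧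
  StableUnderTransfiniteComposition.{w} W

/-- The saturated class generated by `S`: the smallest weakly saturated class containing `S`. -/
def SaturatedClassGen {D : Type*} [Category D] (S : MorphismProperty D) :
    MorphismProperty D :=
  fun _ _ f => ∀ W : MorphismProperty D, IsWeaklySaturated.{w} W → S ≤ W → W f

/-- The maps having the right lifting property with respect to all maps in `S`. -/
def RLP {D : Type*} [Category D] (S : MorphismProperty D) : MorphismProperty D :=
  fun _ _ g => ∀ ⦃A B : D⦄ (f : A ⟶ B), S f → HasLiftingProperty f g

/-- The maps having the left lifting property with respect to all maps in `S`. -/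
def LLP {D : Type*} [Category D] (S : MorphismProperty D) : MorphismProperty D :=
  fun _ _ f => ∀ ⦃A B : D⦄ (g : A ⟶ B), S g → HasLiftingProperty f g

end PaperMSMonad

namespace PaperMSMonad

variable {C : Type u} [SmallCategory C]

/-- Elementary homotopy data on the category of presheaves on `C`: a functorial cylinder
`X ↦ X ⊗ I` with endpoint inclusions `∂⁰`, `∂¹` and projection `σ`, such that
`[∂⁰,∂¹] : X + X → X ⊗ I` is always a monomorphism, the cylinder functor preserves small
colimits and monomorphisms, and the endpoint naturality squares at monomorphisms
are pullbacks. -/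
structure ElementaryHomotopyData (C : Type u) [SmallCategory C] where
  cyl : Psh C ⥤ Psh C
  d0 : 𝟭 (Psh C) ⟶ cyl
  d1 : 𝟭 (Psh C) ⟶ cyl
  σ : cyl ⟶ 𝟭 (Psh C)
  d0_σ : ∀ X : Psh C, d0.app X ≫ σ.app X = 𝟙 X
  d1_σ : ∀ X : Psh C, d1.app X ≫ σ.app X = 𝟙 X
  mono_pair : ∀ X : Psh C, Mono (coprod.desc (d0.app X) (d1.app X))
  preservesColimits : PreservesColimitsOfSize.{u, u} cyl
  preservesMono : ∀ ⦃K L : Psh C⦄ (j : K ⟶ L), Mono j → Mono (cyl.map j)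
  isPullback0 : ∀ ⦃K L : Psh C⦄ (j : K ⟶ L), Mono j →
    IsPullback j (d0.app K) (d0.app L) (cyl.map j)
  isPullback1 : ∀ ⦃K L : Psh C⦄ (j : K ⟶ L), Mono j →
    IsPullback j (d1.app K) (d1.app L) (cyl.map j)

namespace ElementaryHomotopyData

variable (E : ElementaryHomotopyData C)

/-- `f ≃ g`: there is a homotopy `θ : X ⊗ I ⟶ Y` from `f` to `g`. -/
def Htpy {X Y : Psh C} (f g : X ⟶ Y) : Prop :=
  ∃ θ : E.cyl.obj X ⟶ Y, E.d0.app X ≫ θ = f ∧ E.d1.app X ≫ θ = g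

/-- `f ≃* g`: the equivalence relation generated by the homotopy relation. -/
def HtpyStar {X Y : Psh C} (f g : X ⟶ Y) : Prop :=
  Relation.EqvGen (fun a b : X ⟶ Y => E.Htpy a b) f g

/-- `[X,Y]`: the quotient of `Hom(X,Y)` by the equivalence relation generated by homotopy. -/
def HQ (X Y : Psh C) :=
  Quot (fun a b : X ⟶ Y => E.Htpy a b)

/-- The class of `f : X ⟶ Y` in `[X,Y]`. -/
def HQ.mk {X Y : Psh C} (f : X ⟶ Y) : E.HQ X Y :=
  Quot.mk _ f

/-- `[f,A] : [Y,A] → [X,A]`, precomposition with `f` on homotopy classes. -/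
def precomp {X Y A : Psh C} (f : X ⟶ Y) : E.HQ Y A → E.HQ X A :=
  Quot.lift (fun h => HQ.mk E (f ≫ h)) (fun h h' hh => Quot.sound (by
    obtain ⟨θ, h0, h1⟩ := hh
    exact ⟨E.cyl.map f ≫ θ,
      by rw [← Category.assoc, ← E.d0.naturality, Functor.id_map, Category.assoc, h0],
      by rw [← Category.assoc, ← E.d1.naturality, Functor.id_map, Category.assoc, h1]⟩))

/-- For a monomorphism `j : K ⟶ L` the canonical map `K⊗I ∪ L⊗{0} ⟶ L⊗I`. -/
noncomputable def gluing0 {K L : Psh C} (j : K ⟶ L) :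
    pushout (E.d0.app K) j ⟶ E.cyl.obj L :=
  pushout.desc (E.cyl.map j) (E.d0.app L) (by rw [← E.d0.naturality j]; rfl)

/-- For a monomorphism `j : K ⟶ L` the canonical map `K⊗I ∪ L⊗{1} ⟶ L⊗I`. -/
noncomputable def gluing1 {K L : Psh C} (j : K ⟶ L) :
    pushout (E.d1.app K) j ⟶ E.cyl.obj L :=
  pushout.desc (E.cyl.map j) (E.d1.app L) (by rw [← E.d1.naturality j]; rfl)

/-- For a map `j : K ⟶ L` the canonical map `K⊗I ∪ L⊗∂I ⟶ L⊗I`. -/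
noncomputable def gluingBoth {K L : Psh C} (j : K ⟶ L) :
    pushout (coprod.desc (E.d0.app K) (E.d1.app K)) (coprod.map j j) ⟶ E.cyl.obj L :=
  pushout.desc (E.cyl.map j) (coprod.desc (E.d0.app L) (E.d1.app L)) (by
    apply coprod.hom_ext
    · rw [coprod.inl_desc_assoc, coprod.inl_map_assoc, coprod.inl_desc]
      exact (E.d0.naturality j).symm
    · rw [coprod.inr_desc_assoc, coprod.inr_map_assoc, coprod.inr_desc]
      exact (E.d1.naturality j).symm)

/-- The class `Λ⁰_I(S)`. -/
inductive Lambda0 (E : ElementaryHomotopyData C) (S : MorphismProperty (Psh C)) :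
    ∀ ⦃X Y : Psh C⦄, (X ⟶ Y) → Prop
  | ofS ⦃X Y : Psh C⦄ (f : X ⟶ Y) : S f → Lambda0 E S f
  | glue0 ⦃K L : Psh C⦄ (j : K ⟶ L) : Mono j → Lambda0 E S (E.gluing0 j)
  | glue1 ⦃K L : Psh C⦄ (j : K ⟶ L) : Mono j → Lambda0 E S (E.gluing1 j)

/-- The operation `𝚲(-)` applied to a class of maps. -/
inductive LambdaStep (E : ElementaryHomotopyData C) (P : MorphismProperty (Psh C)) :
    ∀ ⦃X Y : Psh C⦄, (X ⟶ Y) → Prop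
  | glue ⦃K L : Psh C⦄ (j : K ⟶ L) : P j → LambdaStep E P (E.gluingBoth j)

/-- The class `Λⁿ_I(S)`. -/
def LambdaN (S : MorphismProperty (Psh C)) : ℕ → MorphismProperty (Psh C)
  | 0 => Lambda0 E S
  | (n + 1) => LambdaStep E (LambdaN S n)

/-- The class `Λ_I(S) = ⋃ₙ Λⁿ_I(S)`. -/
def Lambda (S : MorphismProperty (Psh C)) : MorphismProperty (Psh C) :=
  fun _ _ f => ∃ n : ℕ, LambdaN E S n f

/-- The class `𝔄_I(S)` of anodyne extensions: maps with the left lifting property with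
respect to every map having the right lifting property with respect to `Λ_I(S)`. -/
def Anodyne (S : MorphismProperty (Psh C)) : MorphismProperty (Psh C) :=
  LLP (RLP (E.Lambda S))

/-- `A` is naively fibrant if `A ⟶ 1` has the right lifting property with respect to all
anodyne extensions. -/
def NaivelyFibrant (S : MorphismProperty (Psh C)) (A : Psh C) : Prop :=
  RLP (E.Anodyne S) (terminal.from A)

/-- A map `f : X ⟶ Y` is a `T`-weak equivalence if `[f,A] : [Y,A] → [X,A]` is a bijection
for every `T`-algebra `A`. -/
def TWeakEquiv (T : Monad (Psh C)) : MorphismProperty (Psh C) :=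
  fun _ _ f => ∀ A : T.Algebra, Function.Bijective (E.precomp (A := A.A) f)

end ElementaryHomotopyData

/-- The generating set of units `𝔊 = {η_{Gⁱ} : Gⁱ ⟶ T(Gⁱ)}`. -/
inductive unitsOf (T : Monad (Psh C)) {ι : Type u} (G : ι → Psh C) :
    ∀ ⦃X Y : Psh C⦄, (X ⟶ Y) → Prop
  | mk (i : ι) : unitsOf T G (T.η.app (G i))

end PaperMSMonad

namespace PaperMSMonad

open CategoryTheory Category Limits


section Helpers

lemma isWeaklySaturated_lift {D : Type*} [Category D] {P Q : D} (p : P ⟶ Q) :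
    IsWeaklySaturated.{w} (D := D) (fun _ _ f => HasLiftingProperty f p) := by
  refine ⟨fun X Y f hf => inferInstance, fun Z X Y P' t f g b sq hf => ?_,
    fun X Y Z W' f g hr hg => ?_, ?_⟩
  · exact sq.hasLiftingProperty p
  · obtain ⟨i, r, i', r', h1, h2, h3, h4⟩ := hr
    refine ⟨fun {a b} sq => ?_⟩
    have w1 : (r ≫ a) ≫ p = g ≫ (r' ≫ b) := by
      rw [assoc, sq.w, ← assoc, ← assoc, h4]
    have sq' : CommSq (r ≫ a) g p (r' ≫ b) := ⟨w1⟩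
    refine ⟨⟨⟨i' ≫ sq'.lift, ?_, ?_⟩⟩⟩
    · rw [← assoc, ← h3, assoc, sq'.fac_left, ← assoc, h1, id_comp]
    · rw [assoc, sq'.fac_right, ← assoc, h2, id_comp]
  · intro J _ _ _ _ F hF hlim c hc
    have : F.IsWellOrderContinuous := ⟨fun m hm => hlim m hm⟩
    exact HasLiftingProperty.transfiniteComposition.hasLiftingProperty_ι_app_bot
      (hc := hc.some) hF

lemma lift_of_saturated {D : Type*} [Category D] {S : MorphismProperty D} {P Q : D}
    (p : P ⟶ Q) (hS : ∀ ⦃A B : D⦄ (f : A ⟶ B), S f → HasLiftingProperty f p)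
    {X Y : D} {f : X ⟶ Y} (hf : SaturatedClassGen.{w} S f) : HasLiftingProperty f p :=
  hf _ (isWeaklySaturated_lift p) hS

variable {C : Type u} [SmallCategory C] (E : ElementaryHomotopyData C)

lemma cyl_isLeftAdjoint : E.cyl.IsLeftAdjoint := by
  have := E.preservesColimits
  exact Presheaf.isLeftAdjoint_of_preservesColimits.{u} E.cyl

/-- Extension of homotopies along `j` into `A`, with prescribed end points. -/
def ExtHtpy (A : Psh C) {K L : Psh C} (j : K ⟶ L) : Prop :=
  ∀ (h h' : L ⟶ A) (θ : E.cyl.obj K ⟶ A), E.d0.app K ≫ θ = j ≫ h → E.d1.app K ≫ θ = j ≫ h' →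
    ∃ ψ : E.cyl.obj L ⟶ A, E.d0.app L ≫ ψ = h ∧ E.d1.app L ≫ ψ = h' ∧ E.cyl.map j ≫ ψ = θ

lemma exists_ext {A B Z : Psh C} {j : A ⟶ B}
    (hj : HasLiftingProperty j (terminal.from Z)) (g : A ⟶ Z) : ∃ h : B ⟶ Z, j ≫ h = g := by
  have sq : CommSq g j (terminal.from Z) (terminal.from B) := ⟨terminal.hom_ext _ _⟩
  exact ⟨sq.lift, sq.fac_left⟩

lemma extHtpy_of_gluingBoth {A K L : Psh C} (j : K ⟶ L)
    (hj : HasLiftingProperty (E.gluingBoth j) (terminal.from A)) : ExtHtpy E A j := by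
  intro h h' θ h0 h1
  obtain ⟨ψ, hψ⟩ := exists_ext hj (pushout.desc θ (coprod.desc h h') (by
    apply coprod.hom_ext
    · rw [coprod.inl_desc_assoc, coprod.inl_map_assoc, coprod.inl_desc]
      exact h0
    · rw [coprod.inr_desc_assoc, coprod.inr_map_assoc, coprod.inr_desc]
      exact h1))
  have e1 := congrArg (fun k => pushout.inl _ _ ≫ k) hψ
  have e2 := congrArg (fun k => pushout.inr _ _ ≫ k) hψ
  simp only [ElementaryHomotopyData.gluingBoth, pushout.inl_desc_assoc, pushout.inl_desc,
    pushout.inr_desc_assoc, pushout.inr_desc] at e1 e2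
  have e3 := congrArg (fun k => coprod.inl ≫ k) e2
  have e4 := congrArg (fun k => coprod.inr ≫ k) e2
  simp only [coprod.inl_desc_assoc, coprod.inl_desc, coprod.inr_desc_assoc,
    coprod.inr_desc] at e3 e4
  exact ⟨ψ, e3, e4, e1⟩

section
variable {R : Psh C ⥤ Psh C} (adj : E.cyl ⊣ R)

/-- The path fibration `A^I ⟶ A × A`. -/
noncomputable def pathMap (A : Psh C) : R.obj A ⟶ A ⨯ A :=
  prod.lift (E.d0.app (R.obj A) ≫ adj.counit.app A) (E.d1.app (R.obj A) ≫ adj.counit.app A)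

lemma end0 {A L : Psh C} (t : L ⟶ R.obj A) :
    t ≫ E.d0.app (R.obj A) ≫ adj.counit.app A = E.d0.app L ≫ (adj.homEquiv L A).symm t := by
  have := E.d0.naturality t
  rw [Functor.id_map] at this
  rw [Adjunction.homEquiv_counit, ← assoc, this, assoc]

lemma end1 {A L : Psh C} (t : L ⟶ R.obj A) :
    t ≫ E.d1.app (R.obj A) ≫ adj.counit.app A = E.d1.app L ≫ (adj.homEquiv L A).symm t := by
  have := E.d1.naturality t
  rw [Functor.id_map] at this
  rw [Adjunction.homEquiv_counit, ← assoc, this, assoc]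

lemma lift_iff_extHtpy {A K L : Psh C} (j : K ⟶ L) :
    HasLiftingProperty j (pathMap E adj A) ↔ ExtHtpy E A j := by
  constructor
  · intro hl h h' θ h0 h1
    have sq : CommSq (adj.homEquiv K A θ) j (pathMap E adj A) (prod.lift h h') := by
      refine ⟨?_⟩
      apply Limits.prod.hom_ext
      · simp only [pathMap, assoc, prod.lift_fst]
        rw [end0, Equiv.symm_apply_apply, h0]
      · simp only [pathMap, assoc, prod.lift_snd]
        rw [end1, Equiv.symm_apply_apply, h1]
    have e := sq.fac_right
    have ea := congrArg (fun k => k ≫ Limits.prod.fst) e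
    have eb := congrArg (fun k => k ≫ Limits.prod.snd) e
    simp only [pathMap, assoc, prod.lift_fst, prod.lift_snd] at ea eb
    rw [end0] at ea
    rw [end1] at eb
    refine ⟨(adj.homEquiv L A).symm sq.lift, ea, eb, ?_⟩
    rw [← Adjunction.homEquiv_naturality_left_symm, sq.fac_left, Equiv.symm_apply_apply]
  · intro hx
    refine ⟨fun {a b} sq => ?_⟩
    have e := sq.w
    have ea := congrArg (fun k => k ≫ Limits.prod.fst) e
    have eb := congrArg (fun k => k ≫ Limits.prod.snd) e
    simp only [pathMap, assoc, prod.lift_fst, prod.lift_snd] at ea eb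
    rw [end0] at ea
    rw [end1] at eb
    obtain ⟨ψ, h0, h1, h2⟩ := hx _ _ _ ea eb
    refine ⟨⟨⟨adj.homEquiv L A ψ, ?_, ?_⟩⟩⟩
    · rw [← Adjunction.homEquiv_naturality_left, h2, Equiv.apply_symm_apply]
    · apply Limits.prod.hom_ext
      · simp only [pathMap, assoc, prod.lift_fst]
        rw [end0, Equiv.symm_apply_apply, h0]
      · simp only [pathMap, assoc, prod.lift_snd]
        rw [end1, Equiv.symm_apply_apply, h1]
end

lemma lift_of_lambda {S : MorphismProperty (Psh C)} {A : Psh C} (hA : E.NaivelyFibrant S A)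
    {K L : Psh C} {j : K ⟶ L} (hj : E.Lambda S j) :
    HasLiftingProperty j (terminal.from A) :=
  hA j (fun _ _ _ hg => hg j hj)

lemma ext_of_saturated {S : MorphismProperty (Psh C)} {A : Psh C} (hA : E.NaivelyFibrant S A)
    {K L : Psh C} {j : K ⟶ L} (hj : SaturatedClassGen.{u} S j) :
    HasLiftingProperty j (terminal.from A) :=
  lift_of_saturated _ (fun _ _ f hf => lift_of_lambda E hA ⟨0, .ofS f hf⟩) hj

lemma extHtpy_of_saturated {S : MorphismProperty (Psh C)} {A : Psh C}
    (hA : E.NaivelyFibrant S A) {K L : Psh C} {j : K ⟶ L} (hj : SaturatedClassGen.{u} S j) :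
    ExtHtpy E A j := by
  have := cyl_isLeftAdjoint E
  rw [← lift_iff_extHtpy E (Adjunction.ofIsLeftAdjoint E.cyl)]
  refine lift_of_saturated _ (fun _ _ f hf => ?_) hj
  rw [lift_iff_extHtpy]
  exact extHtpy_of_gluingBoth E f (lift_of_lambda E hA ⟨1, .glue f (.ofS f hf)⟩)

variable {E}

lemma Htpy.precomp {X Y Z : Psh C} (f : X ⟶ Y) {g h : Y ⟶ Z} (H : E.Htpy g h) :
    E.Htpy (f ≫ g) (f ≫ h) := by
  obtain ⟨θ, h0, h1⟩ := H
  exact ⟨E.cyl.map f ≫ θ,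
      by rw [← Category.assoc, ← E.d0.naturality, Functor.id_map, Category.assoc, h0],
      by rw [← Category.assoc, ← E.d1.naturality, Functor.id_map, Category.assoc, h1]⟩

lemma Htpy.postcomp {X Y Z : Psh C} {g h : X ⟶ Y} (H : E.Htpy g h) (f : Y ⟶ Z) :
    E.Htpy (g ≫ f) (h ≫ f) := by
  obtain ⟨θ, h0, h1⟩ := H
  exact ⟨θ ≫ f, by rw [← assoc, h0], by rw [← assoc, h1]⟩

lemma HtpyStar.precomp {X Y Z : Psh C} (f : X ⟶ Y) {g h : Y ⟶ Z} (H : E.HtpyStar g h) :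
    E.HtpyStar (f ≫ g) (f ≫ h) := by
  induction H with
  | rel _ _ h => exact .rel _ _ (Htpy.precomp f h)
  | refl _ => exact .refl _
  | symm _ _ _ ih => exact .symm _ _ ih
  | trans _ _ _ _ _ ih1 ih2 => exact .trans _ _ _ ih1 ih2

lemma HtpyStar.postcomp {X Y Z : Psh C} {g h : X ⟶ Y} (H : E.HtpyStar g h) (f : Y ⟶ Z) :
    E.HtpyStar (g ≫ f) (h ≫ f) := by
  induction H with
  | rel _ _ h => exact .rel _ _ (Htpy.postcomp h f)
  | refl _ => exact .refl _
  | symm _ _ _ ih => exact .symm _ _ ih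
  | trans _ _ _ _ _ ih1 ih2 => exact .trans _ _ _ ih1 ih2

lemma mk_eq_iff {X Y : Psh C} (g h : X ⟶ Y) :
    ElementaryHomotopyData.HQ.mk E g = ElementaryHomotopyData.HQ.mk E h ↔ E.HtpyStar g h :=
  Quot.eq

lemma bijective_iff {X Y A : Psh C} (f : X ⟶ Y) :
    Function.Bijective (E.precomp (A := A) f) ↔
      (∀ h h' : Y ⟶ A, E.HtpyStar (f ≫ h) (f ≫ h') → E.HtpyStar h h') ∧
      (∀ g : X ⟶ A, ∃ h : Y ⟶ A, E.HtpyStar (f ≫ h) g) := by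
  constructor
  · rintro ⟨hi, hs⟩
    refine ⟨fun h h' H => ?_, fun g => ?_⟩
    · rw [← mk_eq_iff]
      apply hi
      exact (mk_eq_iff _ _).2 H
    · obtain ⟨q, hq⟩ := hs (ElementaryHomotopyData.HQ.mk E g)
      obtain ⟨h, rfl⟩ := Quot.exists_rep q
      exact ⟨h, (mk_eq_iff _ _).1 hq⟩
  · rintro ⟨hi, hs⟩
    refine ⟨fun q q' H => ?_, fun q => ?_⟩
    · obtain ⟨h, rfl⟩ := Quot.exists_rep q
      obtain ⟨h', rfl⟩ := Quot.exists_rep q'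
      exact (mk_eq_iff _ _).2 (hi _ _ ((mk_eq_iff _ _).1 H))
    · obtain ⟨g, rfl⟩ := Quot.exists_rep q
      obtain ⟨h, hh⟩ := hs g
      exact ⟨ElementaryHomotopyData.HQ.mk E h, (mk_eq_iff _ _).2 hh⟩

lemma inj_of_ext {A K L : Psh C} {j : K ⟶ L} (h1 : HasLiftingProperty j (terminal.from A))
    (h2 : ExtHtpy E A j) (h h' : L ⟶ A) (H : E.HtpyStar (j ≫ h) (j ≫ h')) :
    E.HtpyStar h h' := by
  generalize hu : j ≫ h = g at H
  generalize hu' : j ≫ h' = g' at H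
  induction H generalizing h h' with
  | rel x y H =>
    obtain ⟨θ, e0, e1⟩ := H
    obtain ⟨ψ, a, b, -⟩ := h2 h h' θ (e0.trans hu.symm) (e1.trans hu'.symm)
    exact .rel _ _ ⟨ψ, a, b⟩
  | refl x =>
    have e0 : E.d0.app K ≫ E.σ.app K ≫ x = x := by
      rw [← assoc, E.d0_σ]
      exact id_comp x
    have e1 : E.d1.app K ≫ E.σ.app K ≫ x = x := by
      rw [← assoc, E.d1_σ]
      exact id_comp x
    obtain ⟨ψ, a, b, -⟩ := h2 h h' (E.σ.app K ≫ x) (e0.trans hu.symm) (e1.trans hu'.symm)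
    exact .rel _ _ ⟨ψ, a, b⟩
  | symm x y _ ih => exact .symm _ _ (ih _ _ hu' hu)
  | trans x y z _ _ ih1 ih2 =>
    obtain ⟨k, hk⟩ := exists_ext h1 y
    exact .trans _ _ _ (ih1 h k hu hk) (ih2 k h' hk hu')

end Helpers

/-- Lemma: under (M1)-(M3), `f : X ⟶ Y` is a `T`-weak equivalence iff `Tf : TX ⟶ TY`
is a homotopy equivalence with a homotopy inverse `f̄ : TY ⟶ TX` which is a homomorphism
of free `T`-algebras. -/
theorem tWeakEquiv_iff_homotopyEquivalence {C : Type u} [SmallCategory C]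
    (E : ElementaryHomotopyData C) (T : Monad (Psh C))
    (hM1a : ∀ ⦃K L : Psh C⦄ (j : K ⟶ L), CategoryTheory.Mono j →
      CategoryTheory.Mono (T.toFunctor.map j))
    (hM1b : ∀ X : Psh C, CategoryTheory.Mono (T.η.app X))
    {ι : Type u} (G : ι → Psh C)
    (hM2 : ∀ X : Psh C, SaturatedClassGen.{u} (unitsOf T G) (T.η.app X))
    (hM3 : ∀ A : T.Algebra, E.NaivelyFibrant (unitsOf T G) A.A)
    {X Y : Psh C} (f : X ⟶ Y) :
    E.TWeakEquiv T f ↔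
      ∃ fbar : T.toFunctor.obj Y ⟶ T.toFunctor.obj X,
        T.μ.app Y ≫ fbar = T.toFunctor.map fbar ≫ T.μ.app X ∧
        E.HtpyStar (T.toFunctor.map f ≫ fbar) (𝟙 (T.toFunctor.obj X)) ∧
        E.HtpyStar (fbar ≫ T.toFunctor.map f) (𝟙 (T.toFunctor.obj Y)) := by
  have hi : ∀ (A : T.Algebra) (Z : Psh C) (h h' : T.toFunctor.obj Z ⟶ A.A),
      E.HtpyStar (T.η.app Z ≫ h) (T.η.app Z ≫ h') → E.HtpyStar h h' := fun A Z =>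
    inj_of_ext (ext_of_saturated E (hM3 A) (hM2 Z)) (extHtpy_of_saturated E (hM3 A) (hM2 Z))
  have hs : ∀ (A : T.Algebra) (Z : Psh C) (g : Z ⟶ A.A),
      ∃ h : T.toFunctor.obj Z ⟶ A.A, T.η.app Z ≫ h = g := fun A Z g =>
    exists_ext (ext_of_saturated E (hM3 A) (hM2 Z)) g
  have nat : ∀ {U V : Psh C} (k : U ⟶ V),
      T.η.app U ≫ T.toFunctor.map k = k ≫ T.η.app V := fun k => (T.η.naturality k).symm
  constructor
  · intro hf
    obtain ⟨g, hg⟩ := ((bijective_iff f).1 (hf (T.free.obj X))).2 (T.η.app X)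
    change Y ⟶ T.toFunctor.obj X at g
    have hY : T.η.app Y ≫ T.toFunctor.map g ≫ T.μ.app X = g := by
      rw [← assoc, nat, assoc]
      exact (congrArg (fun k => g ≫ k) (T.left_unit X)).trans (comp_id _)
    refine ⟨T.toFunctor.map g ≫ T.μ.app X, ?_, ?_, ?_⟩
    · have h1 := T.μ.naturality g
      simp only [Functor.comp_map] at h1
      rw [← assoc, ← h1, Functor.map_comp, assoc, assoc]
      exact congrArg (fun k => T.toFunctor.map (T.toFunctor.map g) ≫ k) (T.assoc X).symm
    · refine hi (T.free.obj X) X _ _ ?_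
      have e : T.η.app X ≫ T.toFunctor.map f ≫ T.toFunctor.map g ≫ T.μ.app X = f ≫ g := by
        rw [← assoc, nat, assoc, hY]
      erw [e, comp_id]
      exact hg
    · refine hi (T.free.obj Y) Y _ _ ?_
      have e : T.η.app Y ≫ (T.toFunctor.map g ≫ T.μ.app X) ≫ T.toFunctor.map f
          = g ≫ T.toFunctor.map f := by
        rw [← assoc, hY]
      erw [e, comp_id]
      refine ((bijective_iff f).1 (hf (T.free.obj Y))).1 _ _ ?_
      have hg' : E.HtpyStar (Y := T.toFunctor.obj X) (f ≫ g) (T.η.app X) := hg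
      have key := HtpyStar.postcomp hg' (T.toFunctor.map f)
      have e1 : (f ≫ g) ≫ T.toFunctor.map f = f ≫ g ≫ T.toFunctor.map f := assoc _ _ _
      have e2 := nat f
      exact Eq.mp (congrArg₂ (fun a b => E.HtpyStar a b) e1 e2) key
  · rintro ⟨b, -, h1, h2⟩ A
    rw [bijective_iff]
    refine ⟨fun h h' H => ?_, fun g => ?_⟩
    · obtain ⟨k, rfl⟩ := hs A Y h
      obtain ⟨k', rfl⟩ := hs A Y h'
      have H2 : E.HtpyStar (T.toFunctor.map f ≫ k) (T.toFunctor.map f ≫ k') := by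
        apply hi A X
        rw [← assoc, ← assoc, nat, assoc, assoc]
        exact H
      have H3 := HtpyStar.precomp b H2
      rw [← assoc, ← assoc] at H3
      have a1 := HtpyStar.postcomp h2 k
      have a2 := HtpyStar.postcomp h2 k'
      rw [id_comp] at a1 a2
      exact HtpyStar.precomp _ (.trans _ _ _ (.symm _ _ a1) (.trans _ _ _ H3 a2))
    · obtain ⟨k, rfl⟩ := hs A X g
      refine ⟨T.η.app Y ≫ b ≫ k, ?_⟩
      have a1 := HtpyStar.precomp (T.η.app X) (HtpyStar.postcomp h1 k)
      rw [id_comp, assoc, ← assoc, nat, assoc] at a1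
      exact a1

end PaperMSMonad
end

section
/- Let 𝒞 be a small category, (−⊗I) elementary homotopy data on Psh(𝒞), and S a set of monomorphisms of Psh(𝒞). If A is naively fibrant (i.e., A → 1 has the right lifting property with respect to every anodyne extension in 𝔄_I(S)), then for every presheaf X the homotopy relation ≃ is an equivalence relation on the hom-set Hom(X, A). -/
open CategoryTheory Category Limits

universe w v u

namespace PaperMSMonad

open CategoryTheory Category Limits

/-- Maps on the two halves of `(X + X) ⊗ I` glue. -/
theorem exists_cyl_coprod_desc {C : Type u} [SmallCategory C]
    (E : ElementaryHomotopyData C) {X A : Psh C} (a b : E.cyl.obj X ⟶ A) :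
    ∃ c : E.cyl.obj (X ⨿ X) ⟶ A,
      E.cyl.map coprod.inl ≫ c = a ∧ E.cyl.map coprod.inr ≫ c = b := by
  haveI := E.preservesColimits
  haveI : PreservesColimitsOfSize.{0, 0} E.cyl := preservesColimitsOfSize_shrink.{0, u, 0, u} E.cyl
  refine ⟨inv (coprodComparison E.cyl X X) ≫ coprod.desc a b, ?_, ?_⟩
  · rw [← coprodComparison_inl, Category.assoc, IsIso.hom_inv_id_assoc, coprod.inl_desc]
  · rw [← coprodComparison_inr, Category.assoc, IsIso.hom_inv_id_assoc, coprod.inr_desc]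

/-- Homotopies into a naively fibrant object out of a common source compose. -/
theorem htpy_euclid {C : Type u} [SmallCategory C]
    (E : ElementaryHomotopyData C) (S : MorphismProperty (Psh C))
    (A : Psh C) (hA : E.NaivelyFibrant S A) {X : Psh C} {f g h : X ⟶ A}
    (hg : E.Htpy f g) (hh : E.Htpy f h) : E.Htpy g h := by
  obtain ⟨a, a0, a1⟩ := hg
  obtain ⟨b, b0, b1⟩ := hh
  obtain ⟨c, c0, c1⟩ := exists_cyl_coprod_desc E a b
  have nat0 : ∀ {K L : Psh C} (j : K ⟶ L), E.d0.app K ≫ E.cyl.map j = j ≫ E.d0.app L :=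
    fun j => (E.d0.naturality j).symm
  have nat1 : ∀ {K L : Psh C} (j : K ⟶ L), E.d1.app K ≫ E.cyl.map j = j ≫ E.d1.app L :=
    fun j => (E.d1.naturality j).symm
  let j : X ⨿ X ⟶ E.cyl.obj X := coprod.desc (E.d0.app X) (E.d1.app X)
  have jl : coprod.inl ≫ j = E.d0.app X := coprod.inl_desc _ _
  have jr : coprod.inr ≫ j = E.d1.app X := coprod.inr_desc _ _
  have s0 : E.d0.app X ≫ E.σ.app X ≫ f = f := by
    have := congrArg (· ≫ f) (E.d0_σ X)
    simpa using this
  have s1 : E.d1.app X ≫ E.σ.app X ≫ f = f := by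
    have := congrArg (· ≫ f) (E.d1_σ X)
    simpa using this
  have w : E.d0.app (X ⨿ X) ≫ c = j ≫ E.σ.app X ≫ f := by
    apply coprod.hom_ext
    · rw [← Category.assoc, ← Category.assoc, jl, s0]
      exact (congrArg (· ≫ c) (nat0 coprod.inl)).symm.trans
        ((Category.assoc _ _ _).trans (by rw [c0]; exact a0))
    · rw [← Category.assoc, ← Category.assoc, jr, s1]
      exact (congrArg (· ≫ c) (nat0 coprod.inr)).symm.trans
        ((Category.assoc _ _ _).trans (by rw [c1]; exact b0))
  have an : E.Anodyne S (E.gluing0 j) := fun _ _ p hp =>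
    hp _ ⟨0, ElementaryHomotopyData.Lambda0.glue0 j (E.mono_pair X)⟩
  haveI := hA _ an
  have sq : CommSq (pushout.desc c (E.σ.app X ≫ f) w) (E.gluing0 j) (terminal.from A)
      (terminal.from _) := ⟨Subsingleton.elim _ _⟩
  obtain ⟨H, hH⟩ : ∃ H, E.gluing0 j ≫ H = pushout.desc c (E.σ.app X ≫ f) w :=
    ⟨sq.lift, sq.fac_left⟩
  have hc : E.cyl.map j ≫ H = c := by
    have e1 : pushout.inl (E.d0.app (X ⨿ X)) j ≫ E.gluing0 j = E.cyl.map j :=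
      pushout.inl_desc _ _ _
    have e2 : pushout.inl (E.d0.app (X ⨿ X)) j ≫ pushout.desc c (E.σ.app X ≫ f) w = c :=
      pushout.inl_desc _ _ _
    rw [← e1, Category.assoc, hH]
    exact e2
  refine ⟨E.d1.app (E.cyl.obj X) ≫ H, ?_, ?_⟩
  · have e : E.cyl.map (E.d0.app X) ≫ H = a := by
      rw [← c0, ← hc, ← jl, ← Category.assoc]
      exact congrArg (· ≫ H) (E.cyl.map_comp _ _)
    rw [← a1, ← e, ← Category.assoc, ← Category.assoc]
    exact congrArg (· ≫ H) (nat1 (E.d0.app X)).symm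
  · have e : E.cyl.map (E.d1.app X) ≫ H = b := by
      rw [← c1, ← hc, ← jr, ← Category.assoc]
      exact congrArg (· ≫ H) (E.cyl.map_comp _ _)
    rw [← b1, ← e, ← Category.assoc, ← Category.assoc]
    exact congrArg (· ≫ H) (nat1 (E.d1.app X)).symm

/-- Lemma: if `A` is naively fibrant with respect to `𝔄_I(S)` for a set `S` of
monomorphisms, then the homotopy relation is an equivalence relation on `Hom(X, A)`. -/
theorem htpy_equivalence_of_naivelyFibrant {C : Type u} [SmallCategory C]
    (E : ElementaryHomotopyData C) (S : MorphismProperty (Psh C))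
    (hS : S ≤ MorphismProperty.monomorphisms (Psh C))
    (A : Psh C) (hA : E.NaivelyFibrant S A) (X : Psh C) :
    Equivalence (fun f g : X ⟶ A => E.Htpy f g) := by
  have r : ∀ f : X ⟶ A, E.Htpy f f := fun f =>
    ⟨E.σ.app X ≫ f, by simpa using congrArg (· ≫ f) (E.d0_σ X),
      by simpa using congrArg (· ≫ f) (E.d1_σ X)⟩
  have s : ∀ {f g : X ⟶ A}, E.Htpy f g → E.Htpy g f := fun h => htpy_euclid E S A hA h (r _)
  exact ⟨r, s, fun h h' => htpy_euclid E S A hA (s h) h'⟩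

end PaperMSMonad
end

section
/- Let X be a set and let P_f(X) denote the set of pairs (S, σ) where S is a finite subset of X and σ : Fin |S| ≃ S is a bijection (|S| the cardinality of S). Then, in the arrow category of Set, the unit η_X : X → FreeMonoid X of the free monoid monad is a retract of the coproduct map ∐_{(S,σ)∈P_f(X)} η_{Fin |S|} : ∐_{(S,σ)} Fin |S| → ∐_{(S,σ)} FreeMonoid (Fin |S|); that is, there are maps s : X → ∐ Fin |S|, u : FreeMonoid X → ∐ FreeMonoid (Fin |S|), r : ∐ Fin |S| → X, and v : ∐ FreeMonoid (Fin |S|) → FreeMonoid X forming commuting squares with the two units such that r ∘ s = id_X and v ∘ u = id_{FreeMonoid X}. -/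
/-- The set `P_f(X)` of pairs `(S, σ)` where `S` is a finite subset of `X` and
`σ : Fin |S| ≃ S` is a bijection. -/
def FinSubsetEnum (X : Type) : Type :=
  Σ S : Finset X, Fin S.card ≃ {x : X // x ∈ S}

/-- The unit `η_X : X → FreeMonoid X` of the free monoid monad is a retract, in the arrow
category of `Set`, of the coproduct `∐_{(S,σ) ∈ P_f(X)} η_{Fin |S|}`. -/
theorem freeMonoid_unit_retract_of_coprod_of_fin_units (X : Type) :
    ∃ (s : X → Σ p : FinSubsetEnum X, Fin p.1.card)
      (u : FreeMonoid X → Σ p : FinSubsetEnum X, FreeMonoid (Fin p.1.card))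
      (r : (Σ p : FinSubsetEnum X, Fin p.1.card) → X)
      (v : (Σ p : FinSubsetEnum X, FreeMonoid (Fin p.1.card)) → FreeMonoid X),
      -- `(s, u)` is a morphism of arrows `η_X ⟶ ∐ η_{Fin |S|}`
      (∀ x : X, u (FreeMonoid.of x) = ⟨(s x).1, FreeMonoid.of (s x).2⟩) ∧
      -- `(r, v)` is a morphism of arrows `∐ η_{Fin |S|} ⟶ η_X`
      (∀ q : Σ p : FinSubsetEnum X, Fin p.1.card,
        v ⟨q.1, FreeMonoid.of q.2⟩ = FreeMonoid.of (r q)) ∧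
      -- the composite is the identity on `η_X`
      r ∘ s = id ∧ v ∘ u = id := by
  classical
  let r : (Σ p : FinSubsetEnum X, Fin p.1.card) → X := fun q => (q.1.2 q.2).1
  let v : (Σ p : FinSubsetEnum X, FreeMonoid (Fin p.1.card)) → FreeMonoid X :=
    fun q => FreeMonoid.map (fun i => (q.1.2 i).1) q.2
  have hv : ∀ w : FreeMonoid X, ∃ q, v q = w := by
    intro w
    let S : Finset X := (FreeMonoid.toList w).toFinset
    let p : FinSubsetEnum X := ⟨S, S.equivFin.symm⟩
    have h : FreeMonoid.toList w ∈ Set.range (List.map (fun i => (p.2 i).1)) := by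
      rw [Set.range_list_map]
      intro x hx
      have hxS : x ∈ S := List.mem_toFinset.mpr hx
      refine ⟨p.2.symm ⟨x, hxS⟩, ?_⟩
      simp
    obtain ⟨l, hl⟩ := h
    exact ⟨⟨p, FreeMonoid.ofList l⟩, hl⟩
  have hr : ∀ x : X, ∃ q, r q = x := by
    intro x
    let p : FinSubsetEnum X := ⟨{x}, (Finset.equivFin {x}).symm⟩
    refine ⟨⟨p, p.2.symm ⟨x, Finset.mem_singleton_self x⟩⟩, ?_⟩
    simp [r]
  have hsq : ∀ q : Σ p : FinSubsetEnum X, Fin p.1.card,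
      v ⟨q.1, FreeMonoid.of q.2⟩ = FreeMonoid.of (r q) := fun q => rfl
  choose u₀ hu₀ using hv
  choose s hs using hr
  refine ⟨s, fun w => if h : ∃ x, FreeMonoid.of x = w then
    ⟨(s h.choose).1, FreeMonoid.of (s h.choose).2⟩ else u₀ w, r, v, ?_, hsq, funext hs, ?_⟩
  · intro x
    have h : ∃ y, FreeMonoid.of y = FreeMonoid.of x := ⟨x, rfl⟩
    have hx : h.choose = x := FreeMonoid.of_injective h.choose_spec
    simp only [dif_pos h]
    rw [hx]
  · funext w
    simp only [Function.comp, id]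
    split_ifs with h
    · rw [hsq, hs]
      exact h.choose_spec
    · exact hu₀ w
end
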